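/- arXiv:1107.5887 — 2 statements merged into one kernel-verified Lean document; each statement's English description precedes it below -/
import Mathlib

section
/- Let n ≥ 1 be a natural number, A > 0, and let v : [0,∞) → [0,∞) be nondecreasing with v(0) = 0 and v(r) > 0 for every r > 0, and suppose that for almost every r > 0 the derivative v'(r) exists and satisfies A·v'(r) ≥ v(r)^{(n−1)/n}. Then v(r) ≥ (r/(n·A))ⁿ for every r ≥ 0. -/
open Set Filter MeasureTheory

/-- The differential inequality arising from the `L¹` Sobolev (isoperimetric) inequality:
if `v` is nondecreasing on `[0,∞)`, `v 0 = 0`, `v > 0` on `(0,∞)`, and for a.e. `r > 0`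
the derivative `v'(r)` exists with `A v'(r) ≥ v(r)^{(n-1)/n}`, then
`v(r) ≥ (r/(nA))ⁿ`. -/
theorem stmt_13 (n : ℕ) (hn : 1 ≤ n) (A : ℝ) (hA : 0 < A) (v : ℝ → ℝ)
    (hmono : MonotoneOn v (Ici 0)) (hv0 : v 0 = 0)
    (hvpos : ∀ r > (0:ℝ), 0 < v r)
    (hODE : ∀ᵐ r ∂(volume.restrict (Ioi (0:ℝ))),
      ∃ d : ℝ, HasDerivAt v d r ∧ v r ^ (((n : ℝ) - 1) / n) ≤ A * d) :
    ∀ r ∈ Ici (0:ℝ), (r / ((n : ℝ) * A)) ^ n ≤ v r := by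
  intro r hr
  have hr0 : (0:ℝ) ≤ r := hr
  have hn0 : (0:ℝ) < n := by exact_mod_cast hn
  have hv_nonneg : ∀ x, 0 ≤ x → 0 ≤ v x := fun x hx => by
    rw [← hv0]; exact hmono (mem_Ici.2 le_rfl) (mem_Ici.2 hx) hx
  have hw : MonotoneOn (fun x => v x ^ (1 / (n:ℝ))) (uIcc 0 r) := by
    rw [uIcc_of_le hr0]
    intro x hx y hy hxy
    exact Real.rpow_le_rpow (hv_nonneg x hx.1) (hmono hx.1 hy.1 hxy) (by positivity)
  have hint := hw.intervalIntegrable_deriv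
  have hmem := hw.intervalIntegral_deriv_mem_uIcc
  have hw0 : v 0 ^ (1 / (n:ℝ)) = 0 := by
    rw [hv0]; exact Real.zero_rpow (by positivity)
  have hwr : 0 ≤ v r ^ (1 / (n:ℝ)) := Real.rpow_nonneg (hv_nonneg r hr0) _
  simp only [hw0, sub_zero] at hmem
  rw [uIcc_of_le hwr] at hmem
  have hlow : ∫ x in (0:ℝ)..r, (1 / ((n:ℝ) * A)) ≤
      ∫ x in (0:ℝ)..r, deriv (fun x => v x ^ (1 / (n:ℝ))) x := by
    refine intervalIntegral.integral_mono_ae_restrict hr0 intervalIntegrable_const hint ?_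
    rw [← Measure.restrict_congr_set Ioc_ae_eq_Icc]
    have h1 := ae_restrict_of_ae_restrict_of_subset (show Ioc 0 r ⊆ Ioi (0:ℝ) from fun x hx => hx.1) hODE
    filter_upwards [h1, ae_restrict_mem measurableSet_Ioc] with x hx hxm
    obtain ⟨d, hd, hle⟩ := hx
    have hp := hvpos x hxm.1
    have hD := hd.rpow_const (p := 1 / (n:ℝ)) (Or.inl hp.ne')
    rw [hD.deriv]
    have e : v x ^ (((n : ℝ) - 1) / n) * v x ^ (1 / (n:ℝ) - 1) = 1 := by
      rw [← Real.rpow_add hp]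
      have : ((n : ℝ) - 1) / n + (1 / (n:ℝ) - 1) = 0 := by field_simp; ring
      rw [this, Real.rpow_zero]
    have hq : 0 < v x ^ (1 / (n:ℝ) - 1) := Real.rpow_pos_of_pos hp _
    have h2 : 1 ≤ A * d * v x ^ (1 / (n:ℝ) - 1) := by
      exact e.symm.le.trans (mul_le_mul_of_nonneg_right hle hq.le)
    rw [div_le_iff₀ (by positivity)]
    calc (1:ℝ) ≤ A * d * v x ^ (1 / (n:ℝ) - 1) := h2
      _ = _ := by field_simp
  rw [intervalIntegral.integral_const, sub_zero, smul_eq_mul] at hlow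
  have h3 : r / ((n:ℝ) * A) ≤ v r ^ (1 / (n:ℝ)) := by
    have := hlow.trans hmem.2
    rwa [mul_one_div] at this
  calc (r / ((n:ℝ) * A)) ^ n ≤ (v r ^ (1 / (n:ℝ))) ^ n :=
        pow_le_pow_left₀ (by positivity) h3 n
    _ = v r := by
        rw [one_div]; exact Real.rpow_inv_natCast_pow (hv_nonneg r hr0) (by omega)
end

section
/- Let n ≥ 2 be a natural number, p ∈ (1,n) a real number, q = p/(p−1), and A > 0. Let μ be a Borel measure on ℝⁿ such that there is a constant C with μ(B(0,r)) ≤ C·rⁿ for all r > 0 and such that ν := lim_{r→∞} μ(B(0,r))/rⁿ exists, where B(0,r) is the Euclidean ball. Suppose that for every continuously differentiable function f : ℝⁿ → ℝ with ∫_{ℝⁿ} |f|^{pn/(n−p)} dμ < ∞ and ∫_{ℝⁿ} ‖∇f‖^p dμ < ∞ one has ( ∫_{ℝⁿ} |f|^{pn/(n−p)} dμ )^{(n−p)/n} ≤ A^p · ∫_{ℝⁿ} ‖∇f(x)‖^p dμ(x). Then ν^{1−p/n} · A_{n,p} ≤ A^p · ν · B_{n,p}, where A_{n,p} = ( ∫₀^∞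 n·q·ρ^{q−1+n}·(1+ρ^q)^{−(n+1)} dρ )^{1−p/n} and B_{n,p} = q^p·((n−p)/p)^p·n·∫₀^∞ ρ^{n+q−1}·(1+ρ^q)^{−n} dρ. In particular, if ν > 0 then ν^{p/n} ≥ A_{n,p}/(A^p·B_{n,p}). -/
open Set Filter MeasureTheory

lemma aux_int (a q s : ℝ) (ha : 0 ≤ a) (hq : 0 < q) (hs : 0 < s) (h : a - q * s < -1) :
    IntegrableOn (fun ρ : ℝ => ρ ^ a * (1 + ρ ^ q) ^ (-s)) (Ioi 0) := by
  have hc : ContinuousOn (fun ρ : ℝ => ρ ^ a * (1 + ρ ^ q) ^ (-s)) (Ici 0) := by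
    refine ContinuousOn.mul ?_ ?_
    · exact (Real.continuous_rpow_const ha).continuousOn
    · refine ContinuousOn.rpow_const ?_ ?_
      · exact (continuous_const.add (Real.continuous_rpow_const hq.le)).continuousOn
      · intro x hx
        left
        have := Real.rpow_nonneg (mem_Ici.1 hx) q
        positivity
  rw [← Ioc_union_Ioi_eq_Ioi (zero_le_one : (0:ℝ) ≤ 1)]
  refine IntegrableOn.union ?_ ?_
  · exact ((hc.mono Icc_subset_Ici_self).integrableOn_Icc).mono_set Ioc_subset_Icc_self
  · refine Integrable.mono' (integrableOn_Ioi_rpow_of_lt h one_pos) ?_ ?_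
    · exact (hc.mono (fun x hx => (zero_le_one.trans (le_of_lt hx) : (0:ℝ) ≤ x))).aestronglyMeasurable
        measurableSet_Ioi
    · filter_upwards [ae_restrict_mem measurableSet_Ioi] with x hx
      have hx0 : 0 < x := zero_lt_one.trans hx
      have hxq : 0 < x ^ q := Real.rpow_pos_of_pos hx0 q
      rw [Real.norm_of_nonneg (by positivity), sub_eq_add_neg, Real.rpow_add hx0,
        ← mul_neg, Real.rpow_mul hx0.le]
      refine mul_le_mul_of_nonneg_left ?_ (by positivity)
      exact Real.rpow_le_rpow_of_nonpos hxq (by linarith) (by linarith)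

lemma aux_deriv (q s : ℝ) (hq : 1 < q) (x : ℝ) (hx : 0 ≤ x) :
    HasDerivAt (fun ρ : ℝ => (1 + ρ ^ q) ^ (-s))
      (-(s * q * x ^ (q - 1) * (1 + x ^ q) ^ (-(s + 1)))) x := by
  have h1 : HasDerivAt (fun ρ : ℝ => 1 + ρ ^ q) (q * x ^ (q - 1)) x :=
    (Real.hasDerivAt_rpow_const (Or.inr hq.le)).const_add 1
  have hp := Real.rpow_nonneg hx q
  have h2 := h1.rpow_const (p := -s) (Or.inl (by positivity))
  convert h2 using 1
  rw [show -s - 1 = -(s + 1) by ring]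
  ring

lemma aux_lim (q s : ℝ) (hq : 0 < q) (hs : 0 < s) :
    Tendsto (fun ρ : ℝ => (1 + ρ ^ q) ^ (-s)) atTop (nhds 0) :=
  (tendsto_rpow_neg_atTop hs).comp (tendsto_atTop_add_const_left _ _ (tendsto_rpow_atTop hq))

lemma aux_tail (q s : ℝ) (hq : 1 < q) (hs : 0 < s) (r : ℝ) (hr : 0 ≤ r) :
    IntegrableOn (fun x => s * q * x ^ (q - 1) * (1 + x ^ q) ^ (-(s + 1))) (Ioi r) ∧
    ∫ x in Ioi r, s * q * x ^ (q - 1) * (1 + x ^ q) ^ (-(s + 1)) = (1 + r ^ q) ^ (-s) := by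
  have hd : ∀ x ∈ Ici r, HasDerivAt (fun ρ : ℝ => -(1 + ρ ^ q) ^ (-s))
      (s * q * x ^ (q - 1) * (1 + x ^ q) ^ (-(s + 1))) x := by
    intro x hx
    have h := (aux_deriv q s hq x (hr.trans hx)).neg
    rw [neg_neg] at h
    exact h
  have hpos : ∀ x ∈ Ioi r, 0 ≤ s * q * x ^ (q - 1) * (1 + x ^ q) ^ (-(s + 1)) := by
    intro x hx
    have : 0 ≤ x := hr.trans (le_of_lt hx)
    positivity
  have hl := (aux_lim q s (by linarith) hs).neg
  have hi := integrableOn_Ioi_deriv_of_nonneg' hd hpos hl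
  refine ⟨hi, ?_⟩
  rw [integral_Ioi_of_hasDerivAt_of_tendsto' hd hi hl]
  simp

lemma aux_layer (n : ℕ) (μ : Measure (EuclideanSpace ℝ (Fin n))) (C : ℝ)
    (hC : ∀ r > (0:ℝ), μ (Metric.ball 0 r) ≤ ENNReal.ofReal (C * r ^ n))
    (q s : ℝ) (hq : 1 < q) (hs : 0 < s) (hqs : n < q * s) (l : ℝ) (hl : 0 < l) :
    Integrable (fun x => (1 + (‖x‖ / l) ^ q) ^ (-s)) μ ∧
    ∫ x, (1 + (‖x‖ / l) ^ q) ^ (-s) ∂μ = ∫ ρ in Ioi (0:ℝ),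
      s * q * ρ ^ (q - 1) * (1 + ρ ^ q) ^ (-(s + 1)) * (μ (Metric.ball 0 (l * ρ))).toReal := by
  have hfin : ∀ r : ℝ, μ (Metric.ball 0 r) < ⊤ := by
    intro r
    have h1 : μ (Metric.ball 0 r) ≤ μ (Metric.ball 0 (max r 1)) :=
      measure_mono (Metric.ball_subset_ball (le_max_left _ _))
    exact h1.trans_lt ((hC _ (by positivity)).trans_lt ENNReal.ofReal_lt_top)
  have : IsLocallyFiniteMeasure μ := by
    refine ⟨fun x => ⟨Metric.ball 0 (‖x‖ + 1), ?_, hfin _⟩⟩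
    exact Metric.isOpen_ball.mem_nhds (by simp)
  set h : ℝ → ℝ := fun ρ => s * q * ρ ^ (q - 1) * (1 + ρ ^ q) ^ (-(s + 1)) with hh
  have hhm : Measurable h := by rw [hh]; fun_prop
  have hh0 : ∀ ρ, 0 ≤ ρ → 0 ≤ h ρ := by
    intro ρ hρ
    simp only [hh]
    positivity
  have hVm : Measurable (fun ρ : ℝ => (μ (Metric.ball 0 (l * ρ))).toReal) := by
    apply Monotone.measurable
    intro a b hab
    exact ENNReal.toReal_mono (hfin _).ne
      (measure_mono (Metric.ball_subset_ball (mul_le_mul_of_nonneg_left hab hl.le)))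
  -- Tonelli
  have key : ∫⁻ x, ENNReal.ofReal ((1 + (‖x‖ / l) ^ q) ^ (-s)) ∂μ =
      ∫⁻ ρ in Ioi (0:ℝ), ENNReal.ofReal (h ρ * (μ (Metric.ball 0 (l * ρ))).toReal) := by
    have e1 : ∀ x : EuclideanSpace ℝ (Fin n), ENNReal.ofReal ((1 + (‖x‖ / l) ^ q) ^ (-s)) =
        ∫⁻ ρ in Ioi (0:ℝ), ({z : EuclideanSpace ℝ (Fin n) × ℝ | ‖z.1‖ < l * z.2}.indicator
          (fun z => ENNReal.ofReal (h z.2))) (x, ρ) := by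
      intro x
      have hx : 0 ≤ ‖x‖ / l := by positivity
      obtain ⟨t1, t2⟩ := aux_tail q s hq hs _ hx
      rw [← t2, ofReal_integral_eq_lintegral_ofReal t1]
      · have : ∀ ρ : ℝ, ({z : EuclideanSpace ℝ (Fin n) × ℝ | ‖z.1‖ < l * z.2}.indicator
          (fun z => ENNReal.ofReal (h z.2))) (x, ρ) =
            (Ioi (‖x‖ / l)).indicator (fun ρ => ENNReal.ofReal (h ρ)) ρ := by
          intro ρ
          simp only [indicator, mem_ofPred_eq, mem_Ioi, div_lt_iff₀ hl, mul_comm]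
        simp_rw [this]
        rw [lintegral_indicator measurableSet_Ioi, Measure.restrict_restrict measurableSet_Ioi,
          inter_eq_left.2 (Ioi_subset_Ioi hx)]
      · filter_upwards [ae_restrict_mem measurableSet_Ioi] with ρ hρ
        exact hh0 ρ (hx.trans (le_of_lt hρ))
    simp_rw [e1]
    rw [lintegral_lintegral_swap]
    · refine setLIntegral_congr_fun measurableSet_Ioi ?_
      intro ρ hρ
      have : ∀ x : EuclideanSpace ℝ (Fin n),
          ({z : EuclideanSpace ℝ (Fin n) × ℝ | ‖z.1‖ < l * z.2}.indicator
          (fun z => ENNReal.ofReal (h z.2))) (x, ρ) =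
            (Metric.ball 0 (l * ρ)).indicator (fun _ => ENNReal.ofReal (h ρ)) x := by
        intro x
        simp only [indicator, mem_ofPred_eq, mem_ball_zero_iff]
      simp only [this]
      rw [lintegral_indicator_const Metric.isOpen_ball.measurableSet,
        ENNReal.ofReal_mul (hh0 ρ (le_of_lt hρ)), ENNReal.ofReal_toReal (hfin _).ne]
    · refine (Measurable.indicator (by fun_prop) ?_).aemeasurable
      exact measurableSet_lt (by fun_prop) (by fun_prop)
  have hgint : IntegrableOn (fun ρ => h ρ * (μ (Metric.ball 0 (l * ρ))).toReal) (Ioi 0) := by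
    have hb := (aux_int (q - 1 + n) q (s + 1) (by have := n.cast_nonneg (α := ℝ); linarith)
      (by linarith) (by linarith) (by linarith)).const_mul (s * q * |C| * l ^ n)
    refine Integrable.mono' hb (hhm.mul hVm).aestronglyMeasurable ?_
    filter_upwards [ae_restrict_mem measurableSet_Ioi] with ρ hρ
    have hρ' : 0 < ρ := hρ
    have hv : (μ (Metric.ball 0 (l * ρ))).toReal ≤ |C| * (l * ρ) ^ n := by
      refine ENNReal.toReal_le_of_le_ofReal (by positivity) ((hC _ (by positivity)).trans ?_)
      exact ENNReal.ofReal_le_ofReal (mul_le_mul_of_nonneg_right (le_abs_self C) (by positivity))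
    rw [Real.norm_of_nonneg (mul_nonneg (hh0 ρ hρ'.le) ENNReal.toReal_nonneg)]
    refine (mul_le_mul_of_nonneg_left hv (hh0 ρ hρ'.le)).trans (le_of_eq ?_)
    simp only [hh]
    rw [Real.rpow_add hρ', Real.rpow_natCast, mul_pow]
    ring
  have hφ0 : ∀ x : EuclideanSpace ℝ (Fin n), 0 ≤ (1 + (‖x‖ / l) ^ q) ^ (-s) := by
    intro x; positivity
  have hφm : AEStronglyMeasurable
      (fun x : EuclideanSpace ℝ (Fin n) => (1 + (‖x‖ / l) ^ q) ^ (-s)) μ := by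
    apply Measurable.aestronglyMeasurable
    fun_prop
  have hg0 : 0 ≤ᵐ[volume.restrict (Ioi (0:ℝ))]
      (fun ρ => h ρ * (μ (Metric.ball 0 (l * ρ))).toReal) := by
    filter_upwards [ae_restrict_mem measurableSet_Ioi] with ρ hρ
    exact mul_nonneg (hh0 ρ (le_of_lt hρ)) ENNReal.toReal_nonneg
  constructor
  · refine ⟨hφm, ?_⟩
    rw [hasFiniteIntegral_iff_ofReal (Eventually.of_forall hφ0), key,
      ← hasFiniteIntegral_iff_ofReal hg0]
    exact hgint.2
  · rw [integral_eq_lintegral_of_nonneg_ae (Eventually.of_forall hφ0) hφm, key,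
      integral_eq_lintegral_of_nonneg_ae hg0 hgint.1]

lemma aux_tendsto (n : ℕ) (μ : Measure (EuclideanSpace ℝ (Fin n))) (C ν : ℝ)
    (hC : ∀ r > (0:ℝ), μ (Metric.ball 0 r) ≤ ENNReal.ofReal (C * r ^ n))
    (hν : Tendsto (fun r => (μ (Metric.ball 0 r)).toReal / r ^ n) atTop (nhds ν))
    (q s : ℝ) (hq : 1 < q) (hs : 0 < s) (hqs : n < q * s) :
    Tendsto (fun l : ℝ => (∫ x, (1 + (‖x‖ / l) ^ q) ^ (-s) ∂μ) / l ^ n) atTop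
      (nhds (ν * ∫ ρ in Ioi (0:ℝ), s * q * ρ ^ (q - 1 + n) * (1 + ρ ^ q) ^ (-(s + 1)))) := by
  have hfin : ∀ r : ℝ, μ (Metric.ball 0 r) < ⊤ := by
    intro r
    have h1 : μ (Metric.ball 0 r) ≤ μ (Metric.ball 0 (max r 1)) :=
      measure_mono (Metric.ball_subset_ball (le_max_left _ _))
    exact h1.trans_lt ((hC _ (by positivity)).trans_lt ENNReal.ofReal_lt_top)
  have hVm : Measurable (fun ρ : ℝ => (μ (Metric.ball 0 ρ)).toReal) := by
    apply Monotone.measurable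
    intro a b hab
    exact ENNReal.toReal_mono (hfin _).ne
      (measure_mono (Metric.ball_subset_ball hab))
  have hb := (aux_int (q - 1 + n) q (s + 1) (by have := n.cast_nonneg (α := ℝ); linarith)
      (by linarith) (by linarith) (by linarith)).const_mul (s * q * |C|)
  rw [← integral_const_mul]
  have main : Tendsto (fun l : ℝ => ∫ ρ in Ioi (0:ℝ),
      s * q * ρ ^ (q - 1 + n) * (1 + ρ ^ q) ^ (-(s + 1)) *
        ((μ (Metric.ball 0 (l * ρ))).toReal / (l * ρ) ^ n)) atTop
      (nhds (∫ ρ in Ioi (0:ℝ), ν * (s * q * ρ ^ (q - 1 + n) * (1 + ρ ^ q) ^ (-(s + 1))))) := by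
    refine tendsto_integral_filter_of_dominated_convergence _ ?_ ?_ hb ?_
    · refine Eventually.of_forall fun l => Measurable.aestronglyMeasurable ?_
      have := hVm.comp (measurable_const_mul l)
      simp only [Function.comp_def] at this
      fun_prop
    · filter_upwards [eventually_gt_atTop 0] with l hl
      filter_upwards [ae_restrict_mem measurableSet_Ioi] with ρ hρ
      have hρ' : 0 < ρ := hρ
      have hv : (μ (Metric.ball 0 (l * ρ))).toReal / (l * ρ) ^ n ≤ |C| := by
        rw [div_le_iff₀ (by positivity)]
        refine ENNReal.toReal_le_of_le_ofReal (by positivity) ((hC _ (by positivity)).trans ?_)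
        exact ENNReal.ofReal_le_ofReal (mul_le_mul_of_nonneg_right (le_abs_self C) (by positivity))
      rw [Real.norm_of_nonneg (by positivity)]
      refine (mul_le_mul_of_nonneg_left hv (by positivity)).trans (le_of_eq ?_)
      ring
    · filter_upwards [ae_restrict_mem measurableSet_Ioi] with ρ hρ
      rw [mul_comm ν]
      exact (hν.comp (tendsto_id.atTop_mul_const hρ)).const_mul _
  refine main.congr' ?_
  filter_upwards [eventually_gt_atTop 0] with l hl
  rw [(aux_layer n μ C hC q s hq hs hqs l hl).2, ← integral_div]
  refine setIntegral_congr_fun measurableSet_Ioi ?_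
  intro ρ hρ
  have hρ' : 0 < ρ := hρ
  simp only
  rw [Real.rpow_add hρ', Real.rpow_natCast, mul_pow]
  field_simp

lemma aux_parts (n q : ℝ) (hq : 1 < q) (hn : 1 < n) (h : n < q * (n - 1)) :
    (∫ ρ in Ioi (0:ℝ), (n - 1) * q * ρ ^ (q - 1 + n) * (1 + ρ ^ q) ^ (-((n - 1) + 1))) -
      (∫ ρ in Ioi (0:ℝ), n * q * ρ ^ (q - 1 + n) * (1 + ρ ^ q) ^ (-(n + 1))) =
    n * ∫ ρ in Ioi (0:ℝ), ρ ^ (n + q - 1) * (1 + ρ ^ q) ^ (-n) := by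
  have i1 := aux_int (n + q - 1) q n (by linarith) (by linarith) (by linarith) (by linarith)
  have i2 := aux_int (n + q - 1) q (n + 1) (by linarith) (by linarith) (by linarith) (by linarith)
  have hz : ∫ ρ in Ioi (0:ℝ), ((n + q - n * q) * (ρ ^ (n + q - 1) * (1 + ρ ^ q) ^ (-n)) +
      n * q * (ρ ^ (n + q - 1) * (1 + ρ ^ q) ^ (-(n + 1)))) =
      0 - (fun ρ : ℝ => ρ ^ (n + q) * (1 + ρ ^ q) ^ (-n)) 0 := by
    have ii : IntegrableOn (fun ρ : ℝ =>
        (n + q - n * q) * (ρ ^ (n + q - 1) * (1 + ρ ^ q) ^ (-n)) +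
        n * q * (ρ ^ (n + q - 1) * (1 + ρ ^ q) ^ (-(n + 1)))) (Ioi 0) :=
      (i1.const_mul _).add (i2.const_mul _)
    refine integral_Ioi_of_hasDerivAt_of_tendsto'
      (f := fun ρ : ℝ => ρ ^ (n + q) * (1 + ρ ^ q) ^ (-n)) ?_ ii ?_
    · intro x hx
      have hx0 : 0 ≤ x := hx
      have h1 : HasDerivAt (fun ρ : ℝ => ρ ^ (n + q)) ((n + q) * x ^ (n + q - 1)) x :=
        Real.hasDerivAt_rpow_const (Or.inr (by linarith))
      refine (h1.mul (aux_deriv q n hq x hx0)).congr_deriv ?_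
      have hp := Real.rpow_nonneg hx0 q
      have e1 : (1 + x ^ q) ^ (-n) = (1 + x ^ q) ^ (-(n + 1)) * (1 + x ^ q) := by
        rw [← Real.rpow_add_one (by positivity)]
        congr 1; ring
      have e2 : x ^ (n + q) * x ^ (q - 1) = x ^ (n + q - 1) * x ^ q := by
        rw [← Real.rpow_add_of_nonneg hx0 (by linarith) (by linarith),
          ← Real.rpow_add_of_nonneg hx0 (by linarith) (by linarith)]
        congr 1; ring
      rw [e1]
      linear_combination (-(n * q * (1 + x ^ q) ^ (-(n + 1)))) * e2
    · have hl := tendsto_rpow_neg_atTop (y := q * n - (n + q)) (by linarith)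
      refine squeeze_zero' ?_ ?_ hl
      · filter_upwards [eventually_gt_atTop 0] with x hx
        positivity
      · filter_upwards [eventually_gt_atTop 0] with x hx
        have hxq : 0 < x ^ q := Real.rpow_pos_of_pos hx q
        rw [show -(q * n - (n + q)) = (n + q) + q * (-n) by ring, Real.rpow_add hx (n + q),
          Real.rpow_mul hx.le]
        refine mul_le_mul_of_nonneg_left ?_ (by positivity)
        exact Real.rpow_le_rpow_of_nonpos hxq (by linarith) (by linarith)
  rw [integral_add (i1.const_mul _) (i2.const_mul _), integral_const_mul, integral_const_mul] at hz
  simp only [Real.zero_rpow (show n + q ≠ 0 by linarith), zero_mul, sub_zero] at hz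
  simp only [show q - 1 + n = n + q - 1 by ring, sub_add_cancel, mul_assoc, integral_const_mul]
  linarith

lemma aux_grad (n : ℕ) (p q : ℝ) (hp : 1 < p) (hpn : p < n)
    (hq : q = p / (p - 1)) (l : ℝ) (hl : 0 < l) (x : EuclideanSpace ℝ (Fin n)) :
    ‖gradient (fun x : EuclideanSpace ℝ (Fin n) =>
      (1 + (‖x‖ / l) ^ q) ^ (-(((n:ℝ) - p) / p))) x‖ ^ p =
    q ^ p * (((n : ℝ) - p) / p) ^ p * (l ^ p)⁻¹ *
      ((1 + (‖x‖ / l) ^ q) ^ (-((n:ℝ) - 1)) - (1 + (‖x‖ / l) ^ q) ^ (-(n:ℝ))) := by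
  have hp1 : 0 < p - 1 := by linarith
  have hq1 : 1 < q := by rw [hq, lt_div_iff₀ hp1]; linarith
  have hpq : q * (p - 1) = p := by rw [hq]; field_simp
  set a := ((n:ℝ) - p) / p with ha
  have ha0 : 0 < a := div_pos (by linarith) (by linarith)
  have hap : (a + 1) * p = n := by rw [ha]; field_simp; ring
  have hu0 : 0 ≤ (‖x‖ / l) ^ q := by positivity
  have hd : HasFDerivAt (fun x : EuclideanSpace ℝ (Fin n) => 1 + (‖x‖ / l) ^ q)
      ((l ^ q)⁻¹ • ((q * ‖x‖ ^ (q - 2)) • innerSL ℝ x)) x := by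
    have := ((hasFDerivAt_norm_rpow x hq1).const_mul ((l ^ q)⁻¹)).const_add 1
    refine this.congr_of_eventuallyEq (Eventually.of_forall fun y => ?_)
    simp only
    rw [Real.div_rpow (norm_nonneg _) hl.le, div_eq_inv_mul]
  have hd2 := hd.rpow_const (p := -a) (Or.inl (by positivity))
  rw [gradient, LinearIsometryEquiv.norm_map, hd2.fderiv, smul_smul, smul_smul, norm_smul,
    innerSL_apply_norm]
  have hx1 : ‖x‖ ^ (q - 2) * ‖x‖ = ‖x‖ ^ (q - 1) := by
    rcases (norm_nonneg x).eq_or_lt with h0 | h0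
    · rw [← h0, mul_zero, Real.zero_rpow (by linarith)]
    · rw [← Real.rpow_add_one h0.ne']; congr 1; ring
  have hW : 0 < 1 + (‖x‖ / l) ^ q := by positivity
  have e : ‖-a * (1 + (‖x‖ / l) ^ q) ^ (-a - 1) * ((l ^ q)⁻¹ * (q * ‖x‖ ^ (q - 2)))‖ * ‖x‖ =
      q * a * (l⁻¹ * (‖x‖ / l) ^ (q - 1)) * (1 + (‖x‖ / l) ^ q) ^ (-(a + 1)) := by
    have : ‖-a * (1 + (‖x‖ / l) ^ q) ^ (-a - 1) * ((l ^ q)⁻¹ * (q * ‖x‖ ^ (q - 2)))‖ =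
       a * (1 + (‖x‖ / l) ^ q) ^ (-a - 1) * ((l ^ q)⁻¹ * (q * ‖x‖ ^ (q - 2))) := by
      rw [neg_mul, neg_mul, norm_neg, Real.norm_of_nonneg (by positivity)]
    rw [this, Real.div_rpow (norm_nonneg _) hl.le (q - 1), ← hx1, Real.rpow_sub_one hl.ne',
      show -a - 1 = -(a + 1) by ring]
    have := Real.rpow_pos_of_pos hl q
    field_simp
  rw [mul_assoc (-a * _), e, Real.mul_rpow (by positivity) (by positivity), Real.mul_rpow (by positivity) (by positivity),
    Real.mul_rpow (by positivity) (by positivity), Real.mul_rpow (by positivity) (by positivity),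
    ← Real.rpow_mul hW.le, ← Real.rpow_mul (by positivity), Real.inv_rpow hl.le, neg_mul, hap,
    show (q - 1) * p = q by linarith, show -((n:ℝ) - 1) = -(n:ℝ) + 1 by ring,
    Real.rpow_add_one hW.ne']
  ring

/-- Theorem A of the paper on the metric measure space `(ℝⁿ, eucl, μ)`: if `μ` has
Euclidean volume growth with asymptotic volume `ν` and satisfies an `L^p` Sobolev
inequality with constant `A`, then `ν^{1-p/n} A_{n,p} ≤ A^p ν B_{n,p}`; in particular,
if `ν > 0` then `ν^{p/n} ≥ A_{n,p}/(A^p B_{n,p})`. -/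
theorem stmt_14 (n : ℕ) (hn : 2 ≤ n) (p q : ℝ) (hp : 1 < p) (hpn : p < n)
    (hq : q = p / (p - 1)) (A : ℝ) (hA : 0 < A)
    (μ : Measure (EuclideanSpace ℝ (Fin n))) (C ν : ℝ)
    (hC : ∀ r > (0:ℝ), μ (Metric.ball 0 r) ≤ ENNReal.ofReal (C * r ^ n))
    (hν : Tendsto (fun r => (μ (Metric.ball 0 r)).toReal / r ^ n) atTop (nhds ν))
    (hSob : ∀ f : EuclideanSpace ℝ (Fin n) → ℝ, ContDiff ℝ 1 f →
      Integrable (fun x => |f x| ^ (p * n / ((n : ℝ) - p))) μ →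
      Integrable (fun x => ‖gradient f x‖ ^ p) μ →
      (∫ x, |f x| ^ (p * n / ((n : ℝ) - p)) ∂μ) ^ (((n : ℝ) - p) / n)
        ≤ A ^ p * ∫ x, ‖gradient f x‖ ^ p ∂μ) :
    ν ^ (1 - p / n) *
        (∫ ρ in Ioi (0:ℝ),
            (n : ℝ) * q * ρ ^ (q - 1 + n) * (1 + ρ ^ q) ^ (-((n : ℝ) + 1))) ^ (1 - p / n)
      ≤ A ^ p * ν *
        (q ^ p * (((n : ℝ) - p) / p) ^ p * (n : ℝ) *
          ∫ ρ in Ioi (0:ℝ), ρ ^ ((n : ℝ) + q - 1) * (1 + ρ ^ q) ^ (-(n : ℝ))) ∧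
    (0 < ν →
      (∫ ρ in Ioi (0:ℝ),
          (n : ℝ) * q * ρ ^ (q - 1 + n) * (1 + ρ ^ q) ^ (-((n : ℝ) + 1))) ^ (1 - p / n) /
        (A ^ p * (q ^ p * (((n : ℝ) - p) / p) ^ p * (n : ℝ) *
          ∫ ρ in Ioi (0:ℝ), ρ ^ ((n : ℝ) + q - 1) * (1 + ρ ^ q) ^ (-(n : ℝ))))
        ≤ ν ^ (p / n)) := by
  have hn0 : (0:ℝ) < n := by linarith
  have hn2 : (2:ℝ) ≤ n := by exact_mod_cast hn
  have hp1 : 0 < p - 1 := by linarith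
  have hq1 : 1 < q := by rw [hq, lt_div_iff₀ hp1]; linarith
  have hpq : q * (p - 1) = p := by rw [hq]; field_simp
  have hs1 : (n:ℝ) < q * ((n:ℝ) - 1) := by
    rw [hq, div_mul_eq_mul_div, lt_div_iff₀ hp1]; nlinarith
  have hs2 : (n:ℝ) < q * (n:ℝ) := by nlinarith
  have T1 := aux_tendsto n μ C ν hC hν q ((n:ℝ) - 1) hq1 (by linarith) hs1
  have T2 := aux_tendsto n μ C ν hC hν q (n:ℝ) hq1 (by linarith) hs2
  have P := aux_parts n q hq1 (by linarith) hs1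
  have hexp : ((n:ℝ) - p) / n = 1 - p / n := by field_simp
  have hexp0 : 0 < 1 - p / (n:ℝ) := by rw [← hexp]; exact div_pos (by linarith) hn0
  have hν0 : 0 ≤ ν := by
    refine ge_of_tendsto hν ?_
    filter_upwards [eventually_gt_atTop 0] with r hr
    positivity
  set JA := ∫ ρ in Ioi (0:ℝ), (n : ℝ) * q * ρ ^ (q - 1 + n) * (1 + ρ ^ q) ^ (-((n : ℝ) + 1)) with hJA
  set JB := ∫ ρ in Ioi (0:ℝ), ρ ^ ((n : ℝ) + q - 1) * (1 + ρ ^ q) ^ (-(n : ℝ)) with hJB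
  have hJA0 : 0 ≤ JA := by
    refine setIntegral_nonneg measurableSet_Ioi fun ρ hρ => ?_
    have : 0 < ρ := hρ
    positivity
  have hJB0 : 0 ≤ JB := by
    refine setIntegral_nonneg measurableSet_Ioi fun ρ hρ => ?_
    have : 0 < ρ := hρ
    positivity
  set c := q ^ p * (((n : ℝ) - p) / p) ^ p with hc
  have hineq : ∀ᶠ l : ℝ in atTop,
      ((∫ x, (1 + (‖x‖ / l) ^ q) ^ (-(n:ℝ)) ∂μ) / l ^ n) ^ (1 - p / n) ≤
      A ^ p * (c * ((∫ x, (1 + (‖x‖ / l) ^ q) ^ (-((n:ℝ) - 1)) ∂μ) / l ^ n -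
        (∫ x, (1 + (‖x‖ / l) ^ q) ^ (-(n:ℝ)) ∂μ) / l ^ n)) := by
    filter_upwards [eventually_gt_atTop 0] with l hl
    have L1 := (aux_layer n μ C hC q ((n:ℝ) - 1) hq1 (by linarith) hs1 l hl).1
    have L2 := (aux_layer n μ C hC q (n:ℝ) hq1 (by linarith) hs2 l hl).1
    have hcd : ContDiff ℝ 1 (fun x : EuclideanSpace ℝ (Fin n) =>
        (1 + (‖x‖ / l) ^ q) ^ (-(((n:ℝ) - p) / p))) := by
      refine ContDiff.rpow_const_of_ne ?_ ?_
      · have : (fun x : EuclideanSpace ℝ (Fin n) => 1 + (‖x‖ / l) ^ q) =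
            fun x => 1 + (l ^ q)⁻¹ * ‖x‖ ^ q := by
          funext x
          rw [Real.div_rpow (norm_nonneg _) hl.le, div_eq_inv_mul]
        rw [this]
        exact contDiff_const.add (contDiff_const.mul (contDiff_norm_rpow hq1))
      · intro x; positivity
    have hf : ∀ x : EuclideanSpace ℝ (Fin n),
        |(1 + (‖x‖ / l) ^ q) ^ (-(((n:ℝ) - p) / p))| ^ (p * n / ((n : ℝ) - p)) =
          (1 + (‖x‖ / l) ^ q) ^ (-(n:ℝ)) := by
      intro x
      have hnp : (n:ℝ) - p ≠ 0 := by linarith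
      rw [abs_of_nonneg (by positivity), ← Real.rpow_mul (by positivity)]
      congr 1
      field_simp
    have S := hSob _ hcd
    simp only [hf, aux_grad n p q hp hpn hq l hl] at S
    have S' := S L2 ((L1.sub L2).const_mul _)
    rw [integral_const_mul, integral_sub L1 L2, hexp] at S'
    have hlp : (l ^ n) ^ (1 - p / (n:ℝ)) = l ^ n / l ^ p := by
      rw [← Real.rpow_natCast, ← Real.rpow_mul hl.le, ← Real.rpow_sub hl]
      congr 1; field_simp
    have hI0 : 0 ≤ ∫ x, (1 + (‖x‖ / l) ^ q) ^ (-(n:ℝ)) ∂μ :=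
      integral_nonneg fun x => by positivity
    have hlpp := Real.rpow_pos_of_pos hl p
    rw [Real.div_rpow hI0 (by positivity), hlp, div_le_iff₀ (by positivity)]
    refine S'.trans (le_of_eq ?_)
    rw [← hc]
    field_simp
  have hlim := le_of_tendsto_of_tendsto (T2.rpow_const (Or.inr hexp0.le))
    (((T1.sub T2).const_mul c).const_mul (A ^ p)) hineq
  have main : ν ^ (1 - p / n) * JA ^ (1 - p / n) ≤ A ^ p * ν * (c * (n : ℝ) * JB) := by
    rw [← Real.mul_rpow hν0 hJA0]
    refine hlim.trans (le_of_eq ?_)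
    rw [← mul_sub, P]
    ring
  refine ⟨main, fun hνp => ?_⟩
  have hD0 : 0 ≤ A ^ p * (c * (n:ℝ) * JB) := by
    have : 0 ≤ c := by
      have : 0 ≤ ((n:ℝ) - p) / p := div_nonneg (by linarith) (by linarith)
      positivity
    positivity
  rcases hD0.eq_or_lt with h0 | h0
  · rw [← h0, div_zero]; positivity
  · rw [div_le_iff₀ h0]
    have hνe := Real.rpow_pos_of_pos hνp (1 - p / n)
    refine le_of_mul_le_mul_left (main.trans (le_of_eq ?_)) hνe
    have : ν ^ (1 - p / (n:ℝ)) * ν ^ (p / (n:ℝ)) = ν := by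
      rw [← Real.rpow_add hνp]; simp
    rw [← mul_assoc (ν ^ (1 - p / (n:ℝ))), this]; ring
end
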